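/- Let α : ℕ → ℕ satisfy α(n)/n → 0 and α(n) ≥ 2 for all large n. Write x = x_{n,α}(1) and a = α(n). Then, as n → ∞: (i) h̃'_{n,α}(1) = log(a) + ∫_0^{log x} (exp(a·v) − 1)·e^v/(e^v − 1) dv + O(1); and (ii) there exists a function p : ℕ → [0,∞) with p(n) = O( x^{a} / ( a³·log x ) ) such that h̃'_{n,α}(1) = log(a) + n/a + n/( a²·(x−1) ) + 2n/( a³·(x−1)·log x ) + p(n) + O( n/( a⁴·(log x)²·(x−1) ) ). -/

import Mathlib

/-!
Write `x = x_{n,α}(1) > 1`, `a = α(n)`, `Li_s = ∑_{j ≤ a} x^j / j^s` and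
`M_k = ∑_{j ≤ a} (a-j)^k x^j`, so that `n = Li_0 = M_0`. Implicit differentiation of the equation
for `x` gives `h̃'(1) = Li_1 - (1 - Li_0 Li_{-2} / Li_{-1}²) / 2`, whose last term is bounded
because `Li_{-2} ≤ a Li_{-1}` and `a Li_0 ≤ 2 Li_{-1}`. The integral in the first expansion is
exactly `∑_{j ≤ a} (x^j - 1) / j`.

For the second expansion, the geometric series
`1/j = ∑_{k < m} (a-j)^k / a^(k+1) + (1 - j/a)^m / j`
yields `Li_1 = ∑_{k < m} M_k / a^(k+1) + R_m`. A telescoping recurrence for `M_k` evaluates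
`M_0, M_1, M_2`; they contain the stated main terms, with `2/(x-1) + 1` in the place of `2/log x`.
The difference of these two numbers lies in `[0, log x]`, and this is the source of the nonnegative
correction `p`. The same recurrence bounds `M_3` and `M_4`, and `R_4` lies between `log a - 4` and
`1 + log a + log x * M_4 / a^4`. The bounded terms are absorbed by the error, which dominates
`1 + 1/(a log x)²`.
-/

section

open Filter Finset Real Asymptotics Topology

/-! ### Logarithmic inequalities -/

theorem sub_one_le_log_mul_self {x : ℝ} (hx : 0 < x) : x - 1 ≤ log x * x := by
  calc x - 1 = (1 - x⁻¹) * x := by rw [sub_mul, one_mul, inv_mul_cancel₀ hx.ne']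
    _ ≤ log x * x := by
      gcongr
      exact one_sub_inv_le_log_of_pos hx

theorem log_sq_mul_le_sub_one_sq {x : ℝ} (hx : 1 ≤ x) : log x ^ 2 * x ≤ (x - 1) ^ 2 := by
  have hx0 : 0 < x := zero_lt_one.trans_le hx
  have hlog := log_nonneg hx
  have hhalf : log x / 2 ≤ sinh (log x / 2) := self_le_sinh_iff.2 (by positivity)
  have hsqrt : exp (log x / 2) = √x := by rw [exp_half, exp_log hx0]
  rw [sinh_eq, exp_neg, hsqrt] at hhalf
  have hle : log x * √x ≤ x - 1 := calc
    log x * √x ≤ (√x - (√x)⁻¹) * √x := by gcongr; linarith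
    _ = x - 1 := by rw [sub_mul, mul_self_sqrt hx0.le, inv_mul_cancel₀ (sqrt_ne_zero'.2 hx0)]
  calc log x ^ 2 * x = (log x * √x) ^ 2 := by rw [mul_pow, sq_sqrt hx0.le]
    _ ≤ (x - 1) ^ 2 := by gcongr

theorem div_sub_one_le_one_add_inv_log {x : ℝ} (hx : 1 < x) : x / (x - 1) ≤ 1 + (log x)⁻¹ := by
  have hlog : log x ≤ x - 1 := log_le_sub_one_of_pos (zero_lt_one.trans hx)
  have hlog0 := log_pos hx
  calc x / (x - 1) = 1 + (x - 1)⁻¹ := by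
        rw [← one_div, one_add_div (sub_pos.2 hx).ne', sub_add_cancel]
    _ ≤ 1 + (log x)⁻¹ := by gcongr

theorem two_div_log_le {x : ℝ} (hx : 1 < x) : 2 / log x ≤ 2 / (x - 1) + 1 := by
  have hx1 := sub_pos.2 hx
  have hlog := le_log_one_add_of_nonneg hx1.le
  rw [add_sub_cancel] at hlog
  rw [div_le_iff₀ (by linarith)] at hlog
  rw [div_add_one hx1.ne', div_le_div_iff₀ (log_pos hx) hx1]
  linarith

theorem two_div_sub_one_add_one_le {x : ℝ} (hx : 1 < x) :
    2 / (x - 1) + 1 ≤ 2 / log x + log x := by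
  have hu := log_pos hx
  have hexp : log x + log x ^ 2 / 2 ≤ x - 1 := by
    have := quadratic_le_exp_of_nonneg hu.le
    rw [exp_log (zero_lt_one.trans hx)] at this
    linarith
  calc 2 / (x - 1) + 1 ≤ 2 / (log x + log x ^ 2 / 2) + 1 := by gcongr
    _ ≤ 2 / log x + log x := by
      rw [div_add_one (by positivity), div_add' _ _ _ hu.ne', div_le_div_iff₀ (by positivity) hu]
      nlinarith [pow_pos hu 2, pow_pos hu 3, pow_pos hu 4]

theorem sum_range_le_sinh (n : ℕ) {y : ℝ} (hy : 0 ≤ y) :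
    ∑ i ∈ range n, y ^ (2 * i + 1) / (2 * i + 1).factorial ≤ sinh y :=
  sum_le_hasSum _ (fun _ _ => by positivity) (hasSum_sinh y)

/-! ### Truncated polylogarithms -/

/-- The polylogarithm `Li_s` truncated after `a` terms. The order `s = 0` enters the equation that
defines `x_{n,α}`, the orders `1` and `-1` enter `h̃`. -/
noncomputable def polylogSum (a : ℕ) (s : ℤ) (x : ℝ) : ℝ :=
  ∑ j ∈ Icc 1 a, x ^ j / (j : ℝ) ^ s

theorem polylogSum_zero (a : ℕ) (x : ℝ) : polylogSum a 0 x = ∑ j ∈ Icc 1 a, x ^ j := by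
  simp [polylogSum]

theorem polylogSum_one (a : ℕ) (x : ℝ) : polylogSum a 1 x = ∑ j ∈ Icc 1 a, x ^ j / j := by
  simp [polylogSum]

theorem polylogSum_neg_one (a : ℕ) (x : ℝ) :
    polylogSum a (-1) x = ∑ j ∈ Icc 1 a, (j : ℝ) * x ^ j := by
  simp [polylogSum, mul_comm]

theorem polylogSum_nonneg (a : ℕ) (s : ℤ) {x : ℝ} (hx : 0 ≤ x) : 0 ≤ polylogSum a s x :=
  sum_nonneg fun _ _ => by positivity

theorem polylogSum_pos {a : ℕ} (ha : 1 ≤ a) (s : ℤ) {x : ℝ} (hx : 0 < x) :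
    0 < polylogSum a s x := by
  refine sum_pos (fun j hj => ?_) (nonempty_Icc.2 ha)
  have hj : 0 < j := (mem_Icc.1 hj).1
  positivity

theorem polylogSum_le_mul_polylogSum_add_one (a : ℕ) (s : ℤ) {x : ℝ} (hx : 0 ≤ x) :
    polylogSum a s x ≤ a * polylogSum a (s + 1) x := by
  rw [polylogSum, polylogSum, mul_sum]
  refine sum_le_sum fun j hj => ?_
  obtain ⟨hj1, hja⟩ := mem_Icc.1 hj
  have hj0 : (j : ℝ) ≠ 0 := by positivity
  calc x ^ j / (j : ℝ) ^ s = j * (x ^ j / (j : ℝ) ^ (s + 1)) := by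
        rw [zpow_add_one₀ hj0]; field_simp
    _ ≤ a * (x ^ j / (j : ℝ) ^ (s + 1)) := by gcongr

theorem hasDerivAt_polylogSum (a : ℕ) (s : ℤ) {x : ℝ} (hx : x ≠ 0) :
    HasDerivAt (polylogSum a s) (polylogSum a (s - 1) x / x) x := by
  have hterm : ∀ j ∈ Icc 1 a, HasDerivAt (fun y : ℝ => y ^ j / (j : ℝ) ^ s)
      (x ^ j / (j : ℝ) ^ (s - 1) / x) x := by
    intro j hj
    have hj0 : j ≠ 0 := (Nat.one_le_iff_ne_zero.1 (mem_Icc.1 hj).1)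
    refine ((hasDerivAt_pow j x).div_const _).congr_deriv ?_
    rw [zpow_sub_one₀ (Nat.cast_ne_zero.2 hj0), ← pow_sub_one_mul hj0 x]
    field_simp
  rw [polylogSum, sum_div]
  exact HasDerivAt.fun_sum hterm

theorem log_le_polylogSum_one_one (a : ℕ) : log a ≤ polylogSum a 1 1 := by
  have hharm : polylogSum a 1 1 = harmonic a := by simp [polylogSum_one, harmonic_eq_sum_Icc]
  rcases a.eq_zero_or_pos with rfl | ha
  · simp [hharm]
  · rw [hharm]
    refine le_trans ?_ (log_add_one_le_harmonic a)
    gcongr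
    exact a.le_succ

theorem polylogSum_one_one_le (a : ℕ) : polylogSum a 1 1 ≤ 1 + log a := by
  simpa [polylogSum_one, harmonic_eq_sum_Icc] using harmonic_le_one_add_log a

theorem one_lt_of_lt_polylogSum_zero {a : ℕ} {x : ℝ} (hx : 0 ≤ x) (h : a < polylogSum a 0 x) :
    1 < x := by
  contrapose! h
  calc polylogSum a 0 x = ∑ j ∈ Icc 1 a, x ^ j := polylogSum_zero a x
    _ ≤ ∑ _j ∈ Icc 1 a, (1 : ℝ) := sum_le_sum fun _ _ => pow_le_one₀ hx h
    _ = a := by simp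

theorem polylogSum_zero_le_mul_pow (a : ℕ) {x : ℝ} (hx : 1 ≤ x) :
    polylogSum a 0 x ≤ a * x ^ a := by
  calc polylogSum a 0 x = ∑ j ∈ Icc 1 a, x ^ j := polylogSum_zero a x
    _ ≤ ∑ _j ∈ Icc 1 a, x ^ a :=
      sum_le_sum fun _ hj => pow_le_pow_right₀ hx (mem_Icc.1 hj).2
    _ = a * x ^ a := by simp

theorem mul_polylogSum_zero_le (a : ℕ) {x : ℝ} (hx : 1 ≤ x) :
    a * polylogSum a 0 x ≤ 2 * polylogSum a (-1) x := by
  induction a with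
  | zero => simp [polylogSum]
  | succ a ih =>
    have hlast : polylogSum a 0 x ≤ (a + 1) * x ^ (a + 1) := calc
      polylogSum a 0 x ≤ a * x ^ a := polylogSum_zero_le_mul_pow a hx
      _ ≤ (a + 1) * x ^ (a + 1) := by
        gcongr
        · exact le_add_of_nonneg_right zero_le_one
        · exact a.le_succ
    rw [polylogSum_zero, polylogSum_neg_one] at ih ⊢
    rw [polylogSum_zero] at hlast
    rw [sum_Icc_succ_top (by simp), sum_Icc_succ_top (by simp)]
    push_cast
    linarith

theorem polylogSum_mul_polylogSum_le (a : ℕ) {x : ℝ} (hx : 1 ≤ x) :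
    polylogSum a 0 x * polylogSum a (-2) x ≤ 2 * polylogSum a (-1) x ^ 2 := by
  have h0 := polylogSum_nonneg a 0 (zero_le_one.trans hx)
  have h1 := polylogSum_nonneg a (-1) (zero_le_one.trans hx)
  calc polylogSum a 0 x * polylogSum a (-2) x
      ≤ polylogSum a 0 x * (a * polylogSum a (-1) x) := by
        gcongr
        exact polylogSum_le_mul_polylogSum_add_one a (-2) (zero_le_one.trans hx)
    _ = a * polylogSum a 0 x * polylogSum a (-1) x := by ring
    _ ≤ 2 * polylogSum a (-1) x * polylogSum a (-1) x :=
        mul_le_mul_of_nonneg_right (mul_polylogSum_zero_le a hx) h1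
    _ = 2 * polylogSum a (-1) x ^ 2 := by ring

/-! ### Moments about the endpoint -/

/-- The moments `∑ (a - j)^k x^j` of the weights `x^j` on `{1, …, a}` about the endpoint `a`, where
the weights are largest for `x > 1`. -/
noncomputable def endpointMoment (a k : ℕ) (x : ℝ) : ℝ :=
  ∑ j ∈ Icc 1 a, ((a : ℝ) - j) ^ k * x ^ j

theorem endpointMoment_zero (a : ℕ) (x : ℝ) : endpointMoment a 0 x = polylogSum a 0 x := by
  simp [endpointMoment, polylogSum]

theorem endpointMoment_nonneg (a k : ℕ) {x : ℝ} (hx : 0 ≤ x) : 0 ≤ endpointMoment a k x := by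
  refine sum_nonneg fun j hj => ?_
  have hja : (j : ℝ) ≤ a := mod_cast (mem_Icc.1 hj).2
  positivity

-- Telescope `(a + 1 - j)^k * x^j` over `j` and expand the power in `a - j`.
theorem sub_one_mul_endpointMoment (a k : ℕ) (x : ℝ) :
    (x - 1) * endpointMoment a k x =
      ∑ i ∈ range k, (k.choose i : ℝ) * endpointMoment a i x + 0 ^ k * x ^ (a + 1) - a ^ k * x := by
  set f : ℕ → ℝ := fun j => ((a : ℝ) + 1 - j) ^ k * x ^ j with hf
  have hstep : ∀ j, f (j + 1) - f j = (x - 1) * (((a : ℝ) - j) ^ k * x ^ j) -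
      ∑ i ∈ range k, (k.choose i : ℝ) * (((a : ℝ) - j) ^ i * x ^ j) := by
    intro j
    have hbinom : ((a : ℝ) + 1 - j) ^ k =
        ∑ i ∈ range k, (k.choose i : ℝ) * ((a : ℝ) - j) ^ i + ((a : ℝ) - j) ^ k := by
      rw [add_sub_right_comm, add_pow, sum_range_succ]
      simp [mul_comm]
    simp only [hf, hbinom, ← mul_assoc, ← sum_mul]
    push_cast
    ring
  have htelescope : ∑ j ∈ Icc 1 a, (f (j + 1) - f j) = 0 ^ k * x ^ (a + 1) - a ^ k * x := by
    rw [← Ico_add_one_right_eq_Icc, sum_Ico_sub _ (by simp)]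
    simp [hf]
  simp only [hstep, sum_sub_distrib, ← mul_sum] at htelescope
  rw [sum_comm] at htelescope
  simp only [← mul_sum] at htelescope
  simp only [endpointMoment]
  linarith

theorem polylogSum_zero_eq (a : ℕ) {x : ℝ} (hx : x ≠ 1) :
    polylogSum a 0 x = (x ^ a - 1) * x / (x - 1) := by
  have hrec := sub_one_mul_endpointMoment a 0 x
  rw [eq_div_iff (sub_ne_zero.2 hx), ← endpointMoment_zero, mul_comm, hrec]
  simp only [range_zero, sum_empty, pow_zero]
  ring

theorem choose_mul_factorial_le (n k : ℕ) : n.choose k * k.factorial ≤ n.factorial := by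
  rcases le_or_gt k n with hk | hk
  · rw [← Nat.choose_mul_factorial_mul_factorial hk]
    exact Nat.le_mul_of_pos_right _ (Nat.factorial_pos _)
  · simp [Nat.choose_eq_zero_of_lt hk]

theorem sub_one_mul_endpointMoment_succ_le (a k : ℕ) {x : ℝ} (hx : 1 < x) :
    (x - 1) * endpointMoment a (k + 1) x ≤
      (k + 1).factorial * (x / (x - 1)) ^ k * endpointMoment a 0 x := by
  have hx1 : 0 < x - 1 := sub_pos.2 hx
  have hM0 := endpointMoment_nonneg a 0 (zero_le_one.trans hx.le)
  induction k using Nat.strong_induction_on with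
  | h k ih =>
    set r := x / (x - 1) with hr
    have hr1 : r - 1 = 1 / (x - 1) := by rw [hr]; field_simp; ring
    have hterm : ∀ i ∈ range k, ((k + 1).choose (i + 1) : ℝ) * endpointMoment a (i + 1) x ≤
        (k + 1).factorial * endpointMoment a 0 x * (r ^ i * (r - 1)) := by
      intro i hi
      have hmoment : endpointMoment a (i + 1) x ≤
          (i + 1).factorial * (r ^ i * (r - 1)) * endpointMoment a 0 x := by
        rw [hr1, mul_one_div, mul_div_assoc', div_mul_eq_mul_div, le_div_iff₀ hx1, mul_comm]
        exact ih i (mem_range.1 hi)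
      have hfact : ((k + 1).choose (i + 1) : ℝ) * (i + 1).factorial ≤ (k + 1).factorial :=
        mod_cast choose_mul_factorial_le (k + 1) (i + 1)
      have hgeom : 0 ≤ r ^ i * (r - 1) := by rw [hr1]; positivity
      calc ((k + 1).choose (i + 1) : ℝ) * endpointMoment a (i + 1) x
          ≤ (k + 1).choose (i + 1) *
              ((i + 1).factorial * (r ^ i * (r - 1)) * endpointMoment a 0 x) := by gcongr
        _ = (k + 1).choose (i + 1) * (i + 1).factorial * endpointMoment a 0 x *
              (r ^ i * (r - 1)) := by ring
        _ ≤ (k + 1).factorial * endpointMoment a 0 x * (r ^ i * (r - 1)) := by gcongr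
    have hsum := sum_le_sum hterm
    rw [← mul_sum, ← sum_mul, geom_sum_mul] at hsum
    have hfact1 : (1 : ℝ) ≤ (k + 1).factorial := mod_cast (k + 1).factorial_pos
    have hboundary : 0 ≤ (a : ℝ) ^ (k + 1) * x := by positivity
    have hrec := sub_one_mul_endpointMoment a (k + 1) x
    rw [sum_range_succ'] at hrec
    simp only [Nat.choose_zero_right, Nat.cast_one, one_mul, zero_pow k.succ_ne_zero,
      zero_mul] at hrec
    nlinarith

theorem polylogSum_one_sub_sum_endpointMoment (a m : ℕ) (x : ℝ) :
    polylogSum a 1 x - ∑ k ∈ range m, endpointMoment a k x / a ^ (k + 1) =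
      ∑ j ∈ Icc 1 a, (1 - (j : ℝ) / a) ^ m * (x ^ j / j) := by
  simp only [polylogSum_one, endpointMoment, sum_div]
  rw [sum_comm, ← sum_sub_distrib]
  refine sum_congr rfl fun j hj => ?_
  obtain ⟨hj1, hja⟩ := mem_Icc.1 hj
  have ha0 : (a : ℝ) ≠ 0 := Nat.cast_ne_zero.2 (by omega)
  have hgeom : (j : ℝ) / a * ∑ k ∈ range m, (1 - (j : ℝ) / a) ^ k = 1 - (1 - (j : ℝ) / a) ^ m := by
    simpa using mul_neg_geom_sum (1 - (j : ℝ) / a) m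
  have hterm : ∀ k, ((a : ℝ) - j) ^ k * x ^ j / a ^ (k + 1) =
      x ^ j / j * ((j : ℝ) / a * (1 - (j : ℝ) / a) ^ k) := by
    intro k
    rw [one_sub_div ha0, div_pow]
    field_simp
    ring
  simp only [hterm, ← mul_sum, hgeom]
  ring

theorem log_sub_le_polylogSum_one_sub (a m : ℕ) {x : ℝ} (hx : 1 ≤ x) :
    log a - m ≤ polylogSum a 1 x - ∑ k ∈ range m, endpointMoment a k x / a ^ (k + 1) := by
  have hterm : ∀ j ∈ Icc 1 a, (1 : ℝ) / j - m / a ≤ (1 - (j : ℝ) / a) ^ m * (x ^ j / j) := by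
    intro j hj
    obtain ⟨hj1, hja⟩ := mem_Icc.1 hj
    have hle : (j : ℝ) / a ≤ 1 := div_le_one_of_le₀ (mod_cast hja) a.cast_nonneg
    have hbernoulli : 1 - m * ((j : ℝ) / a) ≤ (1 - (j : ℝ) / a) ^ m := by
      simpa [sub_eq_add_neg] using
        one_add_mul_le_pow (show (-2 : ℝ) ≤ -((j : ℝ) / a) by linarith) m
    calc (1 : ℝ) / j - m / a = (1 - m * ((j : ℝ) / a)) * (1 / j) := by field_simp
      _ ≤ (1 - (j : ℝ) / a) ^ m * (x ^ j / j) := by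
        gcongr
        exact one_le_pow₀ hx
  have hcount : ∑ _j ∈ Icc 1 a, (m : ℝ) / a ≤ m := by
    rw [sum_const, Nat.card_Icc, Nat.add_sub_cancel, nsmul_eq_mul, mul_div_left_comm]
    exact mul_le_of_le_one_right m.cast_nonneg (div_self_le_one _)
  calc log a - m ≤ polylogSum a 1 1 - ∑ _j ∈ Icc 1 a, (m : ℝ) / a :=
        sub_le_sub (log_le_polylogSum_one_one a) hcount
    _ = ∑ j ∈ Icc 1 a, ((1 : ℝ) / j - m / a) := by simp [polylogSum_one]
    _ ≤ ∑ j ∈ Icc 1 a, (1 - (j : ℝ) / a) ^ m * (x ^ j / j) := sum_le_sum hterm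
    _ = _ := (polylogSum_one_sub_sum_endpointMoment a m x).symm

theorem polylogSum_one_sub_le (a m : ℕ) {x : ℝ} (hx : 0 < x) :
    polylogSum a 1 x - ∑ k ∈ range m, endpointMoment a k x / a ^ (k + 1) ≤
      1 + log a + log x * (endpointMoment a m x / a ^ m) := by
  have hterm : ∀ j ∈ Icc 1 a, (1 - (j : ℝ) / a) ^ m * (x ^ j / j) ≤
      1 / j + log x * (((a : ℝ) - j) ^ m * x ^ j / a ^ m) := by
    intro j hj
    obtain ⟨hj1, hja⟩ := mem_Icc.1 hj
    have ha0 : (a : ℝ) ≠ 0 := Nat.cast_ne_zero.2 (by omega)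
    have hle : (j : ℝ) / a ≤ 1 := div_le_one_of_le₀ (mod_cast hja) a.cast_nonneg
    have ht0 : 0 ≤ 1 - (j : ℝ) / a := sub_nonneg.2 hle
    have ht1 : (1 - (j : ℝ) / a) ^ m ≤ 1 :=
      pow_le_one₀ ht0 (sub_le_self _ (by positivity))
    have hconvex : x ^ j ≤ 1 + j * log x * x ^ j := by
      rw [← sub_le_iff_le_add', ← log_pow]
      exact sub_one_le_log_mul_self (pow_pos hx j)
    calc (1 - (j : ℝ) / a) ^ m * (x ^ j / j)
        ≤ (1 - (j : ℝ) / a) ^ m * ((1 + j * log x * x ^ j) / j) := by gcongr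
      _ = (1 - (j : ℝ) / a) ^ m * (1 / j) + log x * ((1 - (j : ℝ) / a) ^ m * x ^ j) := by
        field_simp
      _ ≤ 1 * (1 / j) + log x * ((1 - (j : ℝ) / a) ^ m * x ^ j) := by gcongr
      _ = 1 / j + log x * (((a : ℝ) - j) ^ m * x ^ j / a ^ m) := by
        rw [one_sub_div ha0, div_pow]
        ring
  calc polylogSum a 1 x - ∑ k ∈ range m, endpointMoment a k x / a ^ (k + 1)
      = ∑ j ∈ Icc 1 a, (1 - (j : ℝ) / a) ^ m * (x ^ j / j) :=
        polylogSum_one_sub_sum_endpointMoment a m x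
    _ ≤ ∑ j ∈ Icc 1 a, (1 / j + log x * (((a : ℝ) - j) ^ m * x ^ j / a ^ m)) := sum_le_sum hterm
    _ = polylogSum a 1 1 + log x * (endpointMoment a m x / a ^ m) := by
        simp [polylogSum_one, endpointMoment, sum_add_distrib, mul_sum, sum_div]
    _ ≤ 1 + log a + log x * (endpointMoment a m x / a ^ m) := by
        gcongr
        exact polylogSum_one_one_le a

/-! ### Second expansion -/

/-- The main terms of `h̃'` in the second expansion, with `N` in the place of `n`. -/
noncomputable def mainTerm (a : ℕ) (N x : ℝ) : ℝ :=
  log a + N / a + N / ((a : ℝ) ^ 2 * (x - 1)) + 2 * N / ((a : ℝ) ^ 3 * (x - 1) * log x)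

/-- The order of the error in the second expansion of `h̃'`, with `N` in the place of `n`. -/
noncomputable def errorOrder (a : ℕ) (N x : ℝ) : ℝ :=
  N / ((a : ℝ) ^ 4 * log x ^ 2 * (x - 1))

/-- The order of the nonnegative correction `p` in the second expansion of `h̃'`. -/
noncomputable def correctionOrder (a : ℕ) (x : ℝ) : ℝ :=
  x ^ a / ((a : ℝ) ^ 3 * log x)

theorem polylogSum_zero_div_sub_one_le (a : ℕ) {x : ℝ} (hx : 1 < x) :
    polylogSum a 0 x / (x - 1) ≤ x ^ a / log x ^ 2 := by
  have hu := log_pos hx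
  rw [polylogSum_zero_eq a hx.ne', div_div, ← sq, div_le_div_iff₀ (by positivity) (by positivity)]
  calc (x ^ a - 1) * x * log x ^ 2 ≤ x ^ a * (log x ^ 2 * x) := by
        rw [mul_assoc, mul_comm x]
        gcongr
        exact sub_le_self _ zero_le_one
    _ ≤ x ^ a * (x - 1) ^ 2 := by
        gcongr
        exact log_sq_mul_le_sub_one_sq hx.le

theorem two_mul_sinh_le_errorOrder {a : ℕ} (ha : 2 ≤ a) {x : ℝ} (hx : 1 < x) :
    2 * sinh (a * log x / 2) ≤ (a * log x) ^ 4 * errorOrder a (polylogSum a 0 x) x := by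
  have hx0 := zero_lt_one.trans hx
  have hu := log_pos hx
  set t := exp (a * log x / 2) with ht
  have ht0 : 0 < t := exp_pos _
  have ht2 : t ^ 2 = x ^ a := by
    rw [ht, ← exp_nat_mul, Nat.cast_ofNat, mul_div_cancel₀ _ two_ne_zero, exp_nat_mul, exp_log hx0]
  have hxt : x ≤ t := by
    refine le_of_sq_le_sq ?_ ht0.le
    rw [ht2]
    exact pow_le_pow_right₀ hx.le ha
  have hpow : x ^ a - 1 = t * (2 * sinh (a * log x / 2)) := by
    rw [sinh_eq, exp_neg, ← ht, ← ht2]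
    field_simp
  have herror : (a * log x) ^ 4 * errorOrder a (polylogSum a 0 x) x =
      t * (2 * sinh (a * log x / 2)) * (log x ^ 2 * x) / (x - 1) ^ 2 := by
    rw [errorOrder, polylogSum_zero_eq a hx.ne', hpow]
    field_simp
  rw [herror, le_div_iff₀ (by positivity)]
  calc 2 * sinh (a * log x / 2) * (x - 1) ^ 2
      ≤ 2 * sinh (a * log x / 2) * (log x * x) ^ 2 := by
        gcongr
        exact sub_one_le_log_mul_self hx0
    _ = x * (2 * sinh (a * log x / 2)) * (log x ^ 2 * x) := by ring
    _ ≤ t * (2 * sinh (a * log x / 2)) * (log x ^ 2 * x) := by gcongr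

theorem one_add_inv_sq_le_errorOrder {a : ℕ} (ha : 2 ≤ a) {x : ℝ} (hx : 1 < x) :
    1 + ((a * log x) ^ 2)⁻¹ ≤ 120 * errorOrder a (polylogSum a 0 x) x := by
  have hu := log_pos hx
  have hsinh := two_mul_sinh_le_errorOrder ha hx
  set L := a * log x
  have hL0 : 0 < L := by positivity
  have hseries := sum_range_le_sinh 3 (half_pos hL0).le
  norm_num [sum_range_succ, Nat.factorial] at hseries
  have hpoly : L ^ 2 + L ^ 4 ≤ 120 * (L + L ^ 3 / 24 + L ^ 5 / 1920) := by
    nlinarith [mul_nonneg hL0.le (sq_nonneg (L ^ 2 - 8 * L)), mul_nonneg hL0.le (sq_nonneg (L - 1)),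
      pow_pos hL0 3]
  refine le_of_mul_le_mul_left ?_ (pow_pos hL0 4)
  calc L ^ 4 * (1 + (L ^ 2)⁻¹) = L ^ 2 + L ^ 4 := by field_simp; ring
    _ ≤ 120 * (2 * sinh (L / 2)) := by linarith
    _ ≤ L ^ 4 * (120 * errorOrder a (polylogSum a 0 x) x) := by linarith

theorem sum_range_three_endpointMoment {a : ℕ} (ha : a ≠ 0) {x : ℝ} (hx : 1 < x) :
    ∑ k ∈ range 3, endpointMoment a k x / a ^ (k + 1) =
      polylogSum a 0 x / a + polylogSum a 0 x / ((a : ℝ) ^ 2 * (x - 1)) +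
        polylogSum a 0 x / ((a : ℝ) ^ 3 * (x - 1)) * (2 / (x - 1) + 1) -
        2 * x / (a * (x - 1)) - 2 * x / ((a : ℝ) ^ 2 * (x - 1) ^ 2) := by
  have hx1 := (sub_pos.2 hx).ne'
  have h1 := sub_one_mul_endpointMoment a 1 x
  have h2 := sub_one_mul_endpointMoment a 2 x
  simp only [sum_range_succ, range_zero, sum_empty] at h1 h2 ⊢
  norm_num [endpointMoment_zero] at h1 h2 ⊢
  rw [mul_comm, ← eq_div_iff hx1] at h1 h2
  rw [h2, h1]
  field_simp
  ring

theorem log_mul_polylogSum_zero_div_le (a : ℕ) {x : ℝ} (hx : 1 < x) :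
    log x * (polylogSum a 0 x / ((a : ℝ) ^ 3 * (x - 1))) ≤ correctionOrder a x := by
  have hu := log_pos hx
  calc log x * (polylogSum a 0 x / ((a : ℝ) ^ 3 * (x - 1)))
      = log x / (a : ℝ) ^ 3 * (polylogSum a 0 x / (x - 1)) := by field_simp
    _ ≤ log x / (a : ℝ) ^ 3 * (x ^ a / log x ^ 2) := by
        gcongr ?_ * ?_
        exact polylogSum_zero_div_sub_one_le a hx
    _ = correctionOrder a x := by
        rw [correctionOrder]
        field_simp

theorem endpointMoment_succ_div_le (a k m : ℕ) {x : ℝ} (hx : 1 < x) :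
    endpointMoment a (k + 1) x / (a : ℝ) ^ m ≤
      (k + 1).factorial * (1 + (log x)⁻¹) ^ k * (polylogSum a 0 x / ((a : ℝ) ^ m * (x - 1))) := by
  have hx1 := sub_pos.2 hx
  have hN := polylogSum_nonneg a 0 (zero_le_one.trans hx.le)
  calc endpointMoment a (k + 1) x / (a : ℝ) ^ m
      = (x - 1) * endpointMoment a (k + 1) x / ((a : ℝ) ^ m * (x - 1)) := by field_simp
    _ ≤ (k + 1).factorial * (x / (x - 1)) ^ k * polylogSum a 0 x / ((a : ℝ) ^ m * (x - 1)) := by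
        gcongr ?_ / _
        simpa only [endpointMoment_zero] using sub_one_mul_endpointMoment_succ_le a k hx
    _ ≤ (k + 1).factorial * (1 + (log x)⁻¹) ^ k * polylogSum a 0 x / ((a : ℝ) ^ m * (x - 1)) := by
        gcongr
        exact div_sub_one_le_one_add_inv_log hx
    _ = _ := mul_div_assoc _ _ _

theorem endpointMoment_three_add_le {a : ℕ} (ha : 1 ≤ a) {x : ℝ} (hx : 1 < x) :
    endpointMoment a 3 x / (a : ℝ) ^ 4 + log x * (endpointMoment a 4 x / (a : ℝ) ^ 4) ≤
      120 * (errorOrder a (polylogSum a 0 x) x + correctionOrder a x) := by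
  have hu := log_pos hx
  have hN := polylogSum_nonneg a 0 (zero_le_one.trans hx.le)
  set M := polylogSum a 0 x / ((a : ℝ) ^ 4 * (x - 1)) with hM
  have hM3 : endpointMoment a 3 x / (a : ℝ) ^ 4 ≤ 6 * (1 + (log x)⁻¹) ^ 2 * M :=
    endpointMoment_succ_div_le a 2 4 hx
  have hM4 : endpointMoment a 4 x / (a : ℝ) ^ 4 ≤ 24 * (1 + (log x)⁻¹) ^ 3 * M :=
    endpointMoment_succ_div_le a 3 4 hx
  have hM_error : ((log x) ^ 2)⁻¹ * M = errorOrder a (polylogSum a 0 x) x := by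
    rw [errorOrder, hM]
    field_simp
  have hM_correction : log x * M ≤ correctionOrder a x := by
    refine le_trans ?_ (log_mul_polylogSum_zero_div_le a hx)
    rw [hM]
    gcongr
    · exact mod_cast ha
    · norm_num
  have hcoeff : 6 * (1 + (log x)⁻¹) ^ 2 + log x * (24 * (1 + (log x)⁻¹) ^ 3) ≤
      120 * (((log x) ^ 2)⁻¹ + log x) := by
    refine le_of_mul_le_mul_left ?_ (pow_pos hu 2)
    field_simp
    nlinarith [mul_nonneg hu.le (sq_nonneg (log x - 1)), sq_nonneg (log x - 1)]
  calc endpointMoment a 3 x / (a : ℝ) ^ 4 + log x * (endpointMoment a 4 x / (a : ℝ) ^ 4)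
      ≤ 6 * (1 + (log x)⁻¹) ^ 2 * M + log x * (24 * (1 + (log x)⁻¹) ^ 3 * M) := by gcongr
    _ = (6 * (1 + (log x)⁻¹) ^ 2 + log x * (24 * (1 + (log x)⁻¹) ^ 3)) * M := by ring
    _ ≤ 120 * (((log x) ^ 2)⁻¹ + log x) * M := by gcongr
    _ = 120 * (((log x) ^ 2)⁻¹ * M + log x * M) := by ring
    _ ≤ 120 * (errorOrder a (polylogSum a 0 x) x + correctionOrder a x) := by
        rw [hM_error]
        gcongr

theorem polylogSum_one_sub_mainTerm_le {a : ℕ} (ha : 1 ≤ a) {x : ℝ} (hx : 1 < x) :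
    polylogSum a 1 x - mainTerm a (polylogSum a 0 x) x ≤
      121 * (errorOrder a (polylogSum a 0 x) x + correctionOrder a x) + 1 := by
  have hN := polylogSum_nonneg a 0 (zero_le_one.trans hx.le)
  have hremainder := polylogSum_one_sub_le a 4 (zero_lt_one.trans hx)
  rw [sum_range_succ, sum_range_three_endpointMoment (Nat.one_le_iff_ne_zero.1 ha) hx] at hremainder
  have hmoments := endpointMoment_three_add_le ha hx
  have hcorrection : polylogSum a 0 x / ((a : ℝ) ^ 3 * (x - 1)) * (2 / (x - 1) + 1) ≤
      2 * polylogSum a 0 x / ((a : ℝ) ^ 3 * (x - 1) * log x) + correctionOrder a x := calc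
    _ ≤ polylogSum a 0 x / ((a : ℝ) ^ 3 * (x - 1)) * (2 / log x + log x) := by
        gcongr ?_ * ?_
        exact two_div_sub_one_add_one_le hx
    _ = 2 * polylogSum a 0 x / ((a : ℝ) ^ 3 * (x - 1) * log x) +
          log x * (polylogSum a 0 x / ((a : ℝ) ^ 3 * (x - 1))) := by field_simp
    _ ≤ _ := by
        gcongr
        exact log_mul_polylogSum_zero_div_le a hx
  have hboundary : 0 ≤ 2 * x / (a * (x - 1)) + 2 * x / ((a : ℝ) ^ 2 * (x - 1) ^ 2) := by positivity
  have herror : 0 ≤ errorOrder a (polylogSum a 0 x) x := by unfold errorOrder; positivity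
  rw [mainTerm]
  linarith

theorem le_polylogSum_one_sub_mainTerm {a : ℕ} (ha : 2 ≤ a) {x : ℝ} (hx : 1 < x) :
    -(6 + 3 * ((a * log x) ^ 2)⁻¹) ≤ polylogSum a 1 x - mainTerm a (polylogSum a 0 x) x := by
  have hx0 := zero_lt_one.trans hx
  have hu := log_pos hx
  have hN := polylogSum_nonneg a 0 hx0.le
  have hremainder := log_sub_le_polylogSum_one_sub a 4 hx.le
  rw [sum_range_succ, sum_range_three_endpointMoment (by positivity) hx] at hremainder
  have hmoment : 0 ≤ endpointMoment a 3 x / (a : ℝ) ^ 4 :=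
    div_nonneg (endpointMoment_nonneg a 3 hx0.le) (by positivity)
  have hcorrection : 2 * polylogSum a 0 x / ((a : ℝ) ^ 3 * (x - 1) * log x) ≤
      polylogSum a 0 x / ((a : ℝ) ^ 3 * (x - 1)) * (2 / (x - 1) + 1) := calc
    _ = polylogSum a 0 x / ((a : ℝ) ^ 3 * (x - 1)) * (2 / log x) := by field_simp
    _ ≤ _ := by
        gcongr ?_ * ?_
        exact two_div_log_le hx
  have hboundary1 : 2 * x / (a * (x - 1)) ≤ 2 + ((a * log x) ^ 2)⁻¹ := by
    have ha2 : 2 / (a : ℝ) ≤ 1 := (div_le_one₀ (by positivity)).2 (mod_cast ha)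
    calc 2 * x / (a * (x - 1)) = 2 / a * (x / (x - 1)) := mul_div_mul_comm _ _ _ _
      _ ≤ 2 / a * (1 + (log x)⁻¹) := by
          gcongr
          exact div_sub_one_le_one_add_inv_log hx
      _ = 2 / a + 2 * (a * log x)⁻¹ := by field_simp
      _ ≤ 2 + ((a * log x) ^ 2)⁻¹ := by
          rw [← inv_pow]
          linarith [two_mul_le_add_sq (a * log x)⁻¹ 1]
  have hboundary2 : 2 * x / ((a : ℝ) ^ 2 * (x - 1) ^ 2) ≤ 2 * ((a * log x) ^ 2)⁻¹ := calc
    2 * x / ((a : ℝ) ^ 2 * (x - 1) ^ 2) ≤ 2 * x / ((a : ℝ) ^ 2 * (log x ^ 2 * x)) := by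
        gcongr
        exact log_sq_mul_le_sub_one_sq hx.le
    _ = 2 * ((a * log x) ^ 2)⁻¹ := by field_simp
  rw [mainTerm]
  push_cast at hremainder
  linarith

theorem sub_mainTerm_mem_Icc {a : ℕ} (ha : 2 ≤ a) {x : ℝ} (hx : 1 < x) {d : ℝ}
    (hd : |d - polylogSum a 1 x| ≤ 1 / 2) :
    d - mainTerm a (polylogSum a 0 x) x ∈
      Set.Icc (-(1000 * errorOrder a (polylogSum a 0 x) x))
        (1000 * (errorOrder a (polylogSum a 0 x) x + correctionOrder a x)) := by
  have hu := log_pos hx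
  have hunit := one_add_inv_sq_le_errorOrder ha hx
  have hlower := le_polylogSum_one_sub_mainTerm ha hx
  have hupper := polylogSum_one_sub_mainTerm_le (one_le_two.trans ha) hx
  have hcorrection : 0 ≤ correctionOrder a x := by unfold correctionOrder; positivity
  have hinv : 0 ≤ ((a * log x) ^ 2)⁻¹ := by positivity
  obtain ⟨hd1, hd2⟩ := abs_le.1 hd
  constructor <;> linarith

/-! ### The saddle-point function -/

/-- `X` is the map `w ↦ x_{n,α}(w)` for `α(n) = a` and `n = N`: on `w > 0`, a positive solution of
the equation `∑_{j=1}^a X(w)^j = N/w`. -/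
def IsSaddleFunction (a : ℕ) (N : ℝ) (X : ℝ → ℝ) : Prop :=
  ∀ w, 0 < w → 0 < X w ∧ polylogSum a 0 (X w) = N / w

/-- The function `h̃_{n,α}` for `α(n) = a` and `n = N`, with `X` in the place of `x_{n,α}`. -/
noncomputable def saddleExponent (a : ℕ) (N : ℝ) (X : ℝ → ℝ) (w : ℝ) : ℝ :=
  w * polylogSum a 1 (X w) - N * log (X w) - 1 / 2 * log (2 * π * w * polylogSum a (-1) (X w))

theorem sub_le_polylogSum_zero_sub {a : ℕ} (ha : 1 ≤ a) {y z : ℝ} (hy : 0 ≤ y) (hyz : y ≤ z) :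
    z - y ≤ polylogSum a 0 z - polylogSum a 0 y := by
  rw [polylogSum_zero, polylogSum_zero, ← sum_sub_distrib]
  have hterm : ∀ j ∈ Icc 1 a, 0 ≤ z ^ j - y ^ j := fun j _ =>
    sub_nonneg.2 (pow_le_pow_left₀ hy hyz j)
  simpa using single_le_sum hterm (left_mem_Icc.2 ha)

theorem abs_sub_le_abs_polylogSum_zero_sub {a : ℕ} (ha : 1 ≤ a) {y z : ℝ} (hy : 0 ≤ y)
    (hz : 0 ≤ z) : |z - y| ≤ |polylogSum a 0 z - polylogSum a 0 y| := by
  wlog hyz : y ≤ z generalizing y z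
  · rw [abs_sub_comm z, abs_sub_comm (polylogSum a 0 z)]
    exact this hz hy (le_of_not_ge hyz)
  · rw [abs_of_nonneg (sub_nonneg.2 hyz)]
    exact (sub_le_polylogSum_zero_sub ha hy hyz).trans (le_abs_self _)

namespace IsSaddleFunction

variable {a : ℕ} {N w : ℝ} {X : ℝ → ℝ}

theorem continuousAt (hX : IsSaddleFunction a N X) (ha : 1 ≤ a) (hw : 0 < w) :
    ContinuousAt X w := by
  have hcont : ContinuousAt (fun v => N / v) w := continuousAt_const.div continuousAt_id hw.ne'
  refine tendsto_iff_norm_sub_tendsto_zero.2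
    (squeeze_zero' (Eventually.of_forall fun _ => norm_nonneg _) ?_
      (tendsto_iff_norm_sub_tendsto_zero.1 hcont))
  filter_upwards [eventually_gt_nhds hw] with v hv
  obtain ⟨hXv, hv_eq⟩ := hX v hv
  obtain ⟨hXw, hw_eq⟩ := hX w hw
  rw [← hv_eq, ← hw_eq]
  exact abs_sub_le_abs_polylogSum_zero_sub ha hXw.le hXv.le

theorem hasDerivAt (hX : IsSaddleFunction a N X) (ha : 1 ≤ a) (hw : 0 < w) :
    HasDerivAt X (-(X w * polylogSum a 0 (X w) / (w * polylogSum a (-1) (X w)))) w := by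
  obtain ⟨hXw, hw_eq⟩ := hX w hw
  have h0 := polylogSum_pos ha 0 hXw
  have h1 := polylogSum_pos ha (-1) hXw
  have hN : N = w * polylogSum a 0 (X w) := by rw [hw_eq, mul_div_cancel₀ _ hw.ne']
  have hN0 : 0 < N := hN ▸ mul_pos hw h0
  have hf : HasDerivAt (fun y => N / polylogSum a 0 y)
      (-(w * polylogSum a (-1) (X w) / (X w * polylogSum a 0 (X w)))) (X w) := by
    refine ((hasDerivAt_const (X w) N).div (hasDerivAt_polylogSum a 0 hXw.ne')
      h0.ne').congr_deriv ?_
    rw [zero_mul, zero_sub, zero_sub, hN]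
    field_simp
  have hinv : ∀ᶠ v in 𝓝 w, N / polylogSum a 0 (X v) = v := by
    filter_upwards [eventually_gt_nhds hw] with v hv
    rw [(hX v hv).2, div_div_cancel₀ hN0.ne']
  refine (HasDerivAt.of_local_left_inverse (hX.continuousAt ha hw) hf
    (neg_ne_zero.2 (by positivity)) hinv).congr_deriv ?_
  rw [inv_neg, inv_div]

theorem hasDerivAt_saddleExponent (hX : IsSaddleFunction a N X) (ha : 1 ≤ a) (hw : 0 < w) :
    HasDerivAt (saddleExponent a N X)
      (polylogSum a 1 (X w) -
        (1 - polylogSum a 0 (X w) * polylogSum a (-2) (X w) / polylogSum a (-1) (X w) ^ 2) /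
          (2 * w)) w := by
  obtain ⟨hXw, hw_eq⟩ := hX w hw
  have h1 := polylogSum_pos ha (-1) hXw
  have hN : N = w * polylogSum a 0 (X w) := by rw [hw_eq, mul_div_cancel₀ _ hw.ne']
  have hX' := hX.hasDerivAt ha hw
  have hpolylog : ∀ s, HasDerivAt (fun v => polylogSum a s (X v)) _ w := fun s =>
    (hasDerivAt_polylogSum a s hXw.ne').comp w hX'
  have hlead := (hasDerivAt_id w).mul (hpolylog 1)
  have hlog := (hX'.log hXw.ne').const_mul N
  have hgauss := ((((hasDerivAt_id w).const_mul (2 * π)).mul (hpolylog (-1))).log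
    (by simp only [Pi.mul_apply, id]; positivity)).const_mul (1 / 2)
  refine ((hlead.sub hlog).sub hgauss).congr_deriv ?_
  norm_num
  rw [hN]
  field_simp
  ring

theorem abs_deriv_sub_polylogSum_one_le (hX : IsSaddleFunction a N X) (ha : 1 ≤ a)
    (hX1 : 1 ≤ X 1) {h : ℝ → ℝ} (hh : Set.EqOn h (saddleExponent a N X) (Set.Ioi 0)) :
    |deriv h 1 - polylogSum a 1 (X 1)| ≤ 1 / 2 := by
  have hderiv := (hX.hasDerivAt_saddleExponent ha one_pos).congr_of_eventuallyEq
    (hh.eventuallyEq_of_mem (Ioi_mem_nhds one_pos))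
  have hX0 := zero_lt_one.trans_le hX1
  have h0 := polylogSum_nonneg a 0 hX0.le
  have h2 := polylogSum_nonneg a (-2) hX0.le
  have hratio_nonneg : 0 ≤
      polylogSum a 0 (X 1) * polylogSum a (-2) (X 1) / polylogSum a (-1) (X 1) ^ 2 := by
    positivity
  have hratio_le : polylogSum a 0 (X 1) * polylogSum a (-2) (X 1) / polylogSum a (-1) (X 1) ^ 2 ≤
      2 :=
    div_le_of_le_mul₀ (sq_nonneg _) zero_le_two (polylogSum_mul_polylogSum_le a hX1)
  rw [hderiv.deriv, abs_le]
  constructor <;> linarith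

end IsSaddleFunction

/-! ### First expansion and the choice of `p` -/

theorem integral_exp_mul_sub_one_mul_exp_div (a : ℕ) {x : ℝ} (hx : 0 < x) :
    ∫ v in (0 : ℝ)..log x, (exp (a * v) - 1) * exp v / (exp v - 1) =
      polylogSum a 1 x - polylogSum a 1 1 := by
  have hderiv : ∀ v, HasDerivAt (fun v => polylogSum a 1 (exp v)) (polylogSum a 0 (exp v)) v := by
    intro v
    refine ((hasDerivAt_polylogSum a 1 (exp_ne_zero v)).comp v (hasDerivAt_exp v)).congr_deriv ?_
    exact div_mul_cancel₀ _ (exp_ne_zero v)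
  have hcont : Continuous fun v => polylogSum a 0 (exp v) := by
    simp only [polylogSum_zero]
    fun_prop
  calc ∫ v in (0 : ℝ)..log x, (exp (a * v) - 1) * exp v / (exp v - 1)
      = ∫ v in (0 : ℝ)..log x, polylogSum a 0 (exp v) := by
        refine intervalIntegral.integral_congr_ae ?_
        filter_upwards [MeasureTheory.compl_mem_ae_iff.2 (MeasureTheory.measure_singleton 0)]
          with v hv _
        rw [polylogSum_zero_eq a (exp_eq_one_iff v |>.not.2 hv), exp_nat_mul]
    _ = polylogSum a 1 (exp (log x)) - polylogSum a 1 (exp 0) :=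
        intervalIntegral.integral_eq_sub_of_hasDerivAt (fun v _ => hderiv v)
          (hcont.intervalIntegrable _ _)
    _ = polylogSum a 1 x - polylogSum a 1 1 := by rw [exp_log hx, exp_zero]

theorem abs_sub_log_add_integral_le (a : ℕ) {x d : ℝ} (hx : 0 < x)
    (hd : |d - polylogSum a 1 x| ≤ 1 / 2) :
    |d - (log a + ∫ v in (0 : ℝ)..log x, (exp (a * v) - 1) * exp v / (exp v - 1))| ≤ 2 := by
  rw [integral_exp_mul_sub_one_mul_exp_div a hx]
  have hlower := log_le_polylogSum_one_one a
  have hupper := polylogSum_one_one_le a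
  obtain ⟨hd1, hd2⟩ := abs_le.1 hd
  rw [abs_le]
  constructor <;> linarith

theorem exists_nonneg_isBigO_and_sub_isBigO {ι : Type*} {l : Filter ι} {D E Q : ι → ℝ} {C : ℝ}
    (hD : ∀ᶠ i in l, D i ∈ Set.Icc (-(C * E i)) (C * (E i + Q i))) :
    ∃ p : ι → ℝ, (∀ i, 0 ≤ p i) ∧ p =O[l] Q ∧ (fun i => D i - p i) =O[l] E := by
  refine ⟨fun i => D i - min (D i) (C * E i), fun i => sub_nonneg.2 (min_le_left _ _), ?_, ?_⟩
  · refine IsBigO.of_bound |C| (hD.mono fun i hi => ?_)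
    rw [norm_eq_abs, norm_eq_abs, ← abs_mul, abs_of_nonneg (sub_nonneg.2 (min_le_left _ _)),
      sub_le_comm]
    exact le_min (sub_le_self _ (abs_nonneg _)) (by linarith [hi.2, le_abs_self (C * Q i)])
  · refine IsBigO.of_bound |C| (hD.mono fun i hi => ?_)
    rw [sub_sub_cancel, norm_eq_abs, norm_eq_abs, ← abs_mul, abs_le]
    exact ⟨le_min ((neg_le_neg (le_abs_self _)).trans hi.1) (neg_abs_le _),
      (min_le_right _ _).trans (le_abs_self _)⟩

end

open Filter Real Asymptotics in
theorem stmt_16_general (α : ℕ → ℕ) (hα : ∀ᶠ n : ℕ in atTop, 2 ≤ α n ∧ α n < n)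
    (x : ℕ → ℝ → ℝ)
    (hx : ∀ n, 1 ≤ n → ∀ w : ℝ, 0 < w →
      0 < x n w ∧ ∑ j ∈ Finset.Icc 1 (α n), x n w ^ j = (n : ℝ) / w)
    (h : ℕ → ℝ → ℝ)
    (hh : ∀ n, ∀ w : ℝ, 0 < w →
      h n w = w * ∑ j ∈ Finset.Icc 1 (α n), x n w ^ j / j - (n : ℝ) * Real.log (x n w)
        - 1 / 2 * Real.log (2 * π * w * ∑ j ∈ Finset.Icc 1 (α n), (j : ℝ) * x n w ^ j)) :
    ((fun n : ℕ => deriv (h n) 1 -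
        (Real.log (α n) + ∫ v in (0 : ℝ)..Real.log (x n 1),
          (Real.exp (α n * v) - 1) * Real.exp v / (Real.exp v - 1)))
      =O[atTop] fun _ : ℕ => (1 : ℝ)) ∧
    ∃ p : ℕ → ℝ, (∀ n, 0 ≤ p n) ∧
      ((fun n : ℕ => p n)
        =O[atTop] fun n : ℕ =>
          x n 1 ^ α n / ((α n : ℝ) ^ 3 * Real.log (x n 1))) ∧
      ((fun n : ℕ => deriv (h n) 1 -
          (Real.log (α n) + (n : ℝ) / α n
            + (n : ℝ) / ((α n : ℝ) ^ 2 * (x n 1 - 1))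
            + 2 * (n : ℝ) / ((α n : ℝ) ^ 3 * (x n 1 - 1) * Real.log (x n 1))
            + p n))
        =O[atTop] fun n : ℕ =>
          (n : ℝ) / ((α n : ℝ) ^ 4 * Real.log (x n 1) ^ 2 * (x n 1 - 1))) := by
  have hsaddle : ∀ᶠ n in atTop, 2 ≤ α n ∧ 1 < x n 1 ∧ polylogSum (α n) 0 (x n 1) = n ∧
      |deriv (h n) 1 - polylogSum (α n) 1 (x n 1)| ≤ 1 / 2 := by
    filter_upwards [hα] with n ⟨h2, hlt⟩
    have hX : IsSaddleFunction (α n) n (x n) := by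
      simpa only [IsSaddleFunction, polylogSum_zero] using hx n (by omega)
    obtain ⟨hpos, hsum⟩ := hX 1 one_pos
    rw [div_one] at hsum
    have h1 : 1 < x n 1 := one_lt_of_lt_polylogSum_zero hpos.le (hsum ▸ Nat.cast_lt.2 hlt)
    refine ⟨h2, h1, hsum, hX.abs_deriv_sub_polylogSum_one_le (by omega) h1.le fun w hw => ?_⟩
    simpa only [saddleExponent, polylogSum_one, polylogSum_neg_one] using hh n w hw
  refine ⟨IsBigO.of_bound 2 ?_, ?_⟩
  · filter_upwards [hsaddle] with n ⟨_, h1, _, hd⟩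
    simpa using abs_sub_log_add_integral_le (α n) (zero_lt_one.trans h1) hd
  · have hbounds : ∀ᶠ n in atTop, deriv (h n) 1 - mainTerm (α n) n (x n 1) ∈
        Set.Icc (-(1000 * errorOrder (α n) n (x n 1)))
          (1000 * (errorOrder (α n) n (x n 1) + correctionOrder (α n) (x n 1))) := by
      filter_upwards [hsaddle] with n ⟨h2, h1, hsum, hd⟩
      simpa only [hsum] using sub_mainTerm_mem_Icc h2 h1 hd
    simpa only [sub_sub, mainTerm, errorOrder, correctionOrder] using
      exists_nonneg_isBigO_and_sub_isBigO hbounds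

open Filter Real Asymptotics in
/-- asymptotics of `h̃'_{n,α}(1)`.  Assume `α(n)/n → 0` and
`α(n) ≥ 2` for all large `n`.  Here `x n w = x_{n,α}(w)` is the positive solution
of `∑_{j=1}^{α(n)} x^j = n/w`,
`h̃ n w = w ∑_{j=1}^{α(n)} x(w)^j/j − n log x(w) − (1/2) log(2πw ∑ j x(w)^j)`,
and we write `x = x n 1`, `a = α n`.  Then:
(i) `h̃'(1) = log a + ∫_0^{log x} (e^{a v} − 1) e^v/(e^v − 1) dv + O(1)`;
(ii) there is a nonnegative `p : ℕ → ℝ` with `p(n) = O(x^a/(a³ log x))` such that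
`h̃'(1) = log a + n/a + n/(a²(x−1)) + 2n/(a³(x−1) log x) + p(n)
          + O(n/(a⁴ (log x)² (x−1)))`. -/
theorem stmt_16 (α : ℕ → ℕ) (hα : ∀ n, 1 ≤ α n)
    (hαn : Tendsto (fun n : ℕ => (α n : ℝ) / n) atTop (nhds 0))
    (hα2 : ∀ᶠ n : ℕ in atTop, 2 ≤ α n)
    (x : ℕ → ℝ → ℝ)
    (hx : ∀ n, 1 ≤ n → ∀ w : ℝ, 0 < w →
      0 < x n w ∧ ∑ j ∈ Finset.Icc 1 (α n), x n w ^ j = (n : ℝ) / w)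
    (h : ℕ → ℝ → ℝ)
    (hh : ∀ n, ∀ w : ℝ, 0 < w →
      h n w = w * ∑ j ∈ Finset.Icc 1 (α n), x n w ^ j / j - (n : ℝ) * Real.log (x n w)
        - 1 / 2 * Real.log (2 * π * w * ∑ j ∈ Finset.Icc 1 (α n), (j : ℝ) * x n w ^ j)) :
    ((fun n : ℕ => deriv (h n) 1 -
        (Real.log (α n) + ∫ v in (0 : ℝ)..Real.log (x n 1),
          (Real.exp (α n * v) - 1) * Real.exp v / (Real.exp v - 1)))
      =O[atTop] fun _ : ℕ => (1 : ℝ)) ∧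
    ∃ p : ℕ → ℝ, (∀ n, 0 ≤ p n) ∧
      ((fun n : ℕ => p n)
        =O[atTop] fun n : ℕ =>
          x n 1 ^ α n / ((α n : ℝ) ^ 3 * Real.log (x n 1))) ∧
      ((fun n : ℕ => deriv (h n) 1 -
          (Real.log (α n) + (n : ℝ) / α n
            + (n : ℝ) / ((α n : ℝ) ^ 2 * (x n 1 - 1))
            + 2 * (n : ℝ) / ((α n : ℝ) ^ 3 * (x n 1 - 1) * Real.log (x n 1))
            + p n))
        =O[atTop] fun n : ℕ =>
          (n : ℝ) / ((α n : ℝ) ^ 4 * Real.log (x n 1) ^ 2 * (x n 1 - 1))) := by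
  refine stmt_16_general α ?_ x hx h hh
  filter_upwards [hα2, hαn.eventually_lt_const one_pos, eventually_gt_atTop 0] with n h2 hlt hn
  exact ⟨h2, mod_cast (div_lt_one (Nat.cast_pos.2 hn)).1 hlt⟩
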